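/- There exist universal constants C, C' > 0 such that for the lazy simple random walk on any connected d-regular graph G on N vertices, every nonempty S ⊆ G and every x ∈ S, the harmonic measure from the uniform (stationary) distribution satisfies h_S(x) ≤ (C/(u(P)·(1−λ))) · max( 1/|S|, (log N)/N ) ≤ (C'/(1−λ)²) · max( 1/|S|, (log N)/N ). -/

import Mathlib

open MeasureTheory Finset
open scoped ENNReal

namespace HM

variable {G : Type*} [Fintype G] [DecidableEq G]

/-- `P` is a stochastic (transition) matrix. -/
def IsStochastic (P : Matrix G G ℝ) : Prop :=
  (∀ x y, 0 ≤ P x y) ∧ ∀ x, ∑ y, P x y = 1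

/-- Irreducibility: every state reaches every other state. -/
def IsIrreducible (P : Matrix G G ℝ) : Prop :=
  ∀ x y : G, ∃ t : ℕ, 0 < (P ^ t) x y

/-- Aperiodicity: the gcd of return times is `1` at every state. -/
def IsAperiodic (P : Matrix G G ℝ) : Prop :=
  ∀ x : G, ∀ d : ℕ, (∀ t : ℕ, 0 < (P ^ t) x x → d ∣ t) → d = 1

/-- `P` is reversible with respect to the full-support probability vector `pi`. -/
def IsReversible (P : Matrix G G ℝ) (pi : G → ℝ) : Prop :=
  (∀ x, 0 < pi x) ∧ (∑ x, pi x = 1) ∧ ∀ x y, pi x * P x y = pi y * P y x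

variable [MeasurableSpace G]

/-- `μ x` is the law of the Markov chain with transition matrix `P` started at `x`:
all finite-dimensional (cylinder) probabilities are given by products of transition
probabilities. -/
def IsMarkovChain (P : Matrix G G ℝ) (μ : G → Measure (ℕ → G)) : Prop :=
  (∀ x, IsProbabilityMeasure (μ x)) ∧
  ∀ (x : G) (t : ℕ) (w : ℕ → G),
    μ x {ω | ∀ i ≤ t, ω i = w i} =
      ENNReal.ofReal ((if w 0 = x then 1 else 0) * ∏ i ∈ Finset.range t, P (w i) (w (i + 1)))

/-- Hitting time `T_S = inf {t ≥ 0 : X_t ∈ S}`, with value `⊤` if `S` is never hit. -/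
noncomputable def hit (S : Set G) (ω : ℕ → G) : ℕ∞ :=
  sInf ((↑) '' {n : ℕ | ω n ∈ S})

/-- Return time `T_S^+ = inf {t ≥ 1 : X_t ∈ S}`, with value `⊤` if `S` is never hit. -/
noncomputable def hitPlus (S : Set G) (ω : ℕ → G) : ℕ∞ :=
  sInf ((↑) '' {n : ℕ | 1 ≤ n ∧ ω n ∈ S})

/-- The event `X_{T_S} = x` (in particular `T_S < ∞`). -/
def hitsAt (S : Set G) (x : G) : Set (ℕ → G) :=
  {ω | ∃ n : ℕ, hit S ω = (n : ℕ∞) ∧ ω n = x}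

/-- Harmonic measure on `S` from `y`: `h_{y,S}(x) = Pr_y[X_{T_S} = x]`. -/
noncomputable def harm (μ : G → Measure (ℕ → G)) (S : Set G) (y x : G) : ℝ :=
  (μ y (hitsAt S x)).toReal

/-- Harmonic measure on `S` from the stationary distribution:
`h_S(x) = ∑_y π(y) h_{y,S}(x)`. -/
noncomputable def harmStat (pi : G → ℝ) (μ : G → Measure (ℕ → G)) (S : Set G) (x : G) : ℝ :=
  ∑ y, pi y * harm μ S y x

/-- `π(S) = ∑_{x ∈ S} π(x)`. -/
noncomputable def piOf (pi : G → ℝ) (S : Set G) : ℝ :=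
  ∑ x, S.indicator pi x

/-- `λ = max_{j > 1} |λ_j|`, via the variational characterization: the largest absolute
value of the quadratic form of `P` on the orthogonal complement of the constants in
`L²(π)`.  For a reversible chain this equals the largest absolute value of a
non-Perron eigenvalue of `P`. -/
noncomputable def lam (P : Matrix G G ℝ) (pi : G → ℝ) : ℝ :=
  sSup {r : ℝ | ∃ f : G → ℝ, ∑ x, pi x * f x = 0 ∧ ∑ x, pi x * f x ^ 2 = 1 ∧
    r = |∑ x, pi x * (f x * ∑ y, P x y * f y)|}

/-- `π_min = min_x π(x)`. -/
noncomputable def pimin (pi : G → ℝ) : ℝ := ⨅ x, pi x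

/-- `π_max = max_x π(x)`. -/
noncomputable def pimax (pi : G → ℝ) : ℝ := ⨆ x, pi x

/-- `u(P) = min_{x ≠ y} Pr_x[T_y < T_x^+]`. -/
noncomputable def uP (μ : G → Measure (ℕ → G)) : ℝ :=
  sInf {r : ℝ | ∃ x y : G, x ≠ y ∧
    r = (μ x {ω | hit {y} ω < hitPlus {x} ω}).toReal}

/-- `E_x[T_S^+]` (as an extended nonnegative real, then converted to `ℝ`). -/
noncomputable def expHitPlus (μ : G → Measure (ℕ → G)) (S : Set G) (x : G) : ℝ :=
  (∫⁻ ω, (hitPlus S ω : ℝ≥0∞) ∂ μ x).toReal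

/-- The number of distinct states visited strictly before the return time `T_S^+`,
i.e. `|{X_0, X_1, …, X_{T_S^+ − 1}}|`. -/
noncomputable def visited (S : Set G) (ω : ℕ → G) : ℕ :=
  Set.ncard {g : G | ∃ n : ℕ, (n : ℕ∞) < hitPlus S ω ∧ ω n = g}


/-- The transition matrix of the lazy simple random walk on a `d`-regular graph:
`P(x,x) = 1/2` and `P(x,y) = 1/(2d)` for `y` adjacent to `x`. -/
noncomputable def lazySRW (H : SimpleGraph G) [DecidableRel H.Adj] (d : ℕ) :
    Matrix G G ℝ :=
  Matrix.of fun x y => if y = x then 1 / 2 else if H.Adj x y then 1 / (2 * d) else 0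


/-!
Let `w y = 𝔼_y[T_S]`. Both `w` and `y ↦ h_{y,S}(x)` satisfy first-step equations off `S`, so the
symmetry of `P` in `L²(π)` yields `h_S(x) = π(x) (1 + (P w)(x))`, and it suffices to bound `w`.

The Dirichlet form of `w` equals its mean `E_π w`, while `w = 0` on `S` gives
`π(S) (E_π w)² ≤ Var_π w`; the Poincaré inequality `(1 - λ) Var_π f ≤ ℰ(f, f)` therefore forces
`(1 - λ) E_π w ≤ 1 / π(S)`. Since `w ≤ t + P^t w` and `P` contracts the variance by `λ²`, taking
`t` of order `log (1 / π_min) / (1 - λ)` turns this into a bound at every point. As `u(P) ≤ 1`,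
this is the first inequality.

For the second, `z ↦ Pr_z[T_y < T_x]` takes both values `0` and `1`, so its variance is at least
`π_min / 2`, and its Dirichlet form is `π(x) Pr_x[T_y < T_x^+]`. The Poincaré inequality now
bounds `u(P)` from below by `(1 - λ) π_min / (2 π_max)`.
-/

open scoped Matrix

section Reversible

variable {V : Type*} [Fintype V] {P : Matrix V V ℝ} {π : V → ℝ}

lemma IsStochastic.mulVec_one (hP : IsStochastic P) : P *ᵥ 1 = 1 :=
  funext fun x ↦ by
    rw [Matrix.mulVec, dotProduct_one, hP.2 x, Pi.one_apply]

lemma IsStochastic.mulVec_smul_one (hP : IsStochastic P) (c : ℝ) :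
    P *ᵥ (c • 1) = c • 1 := by
  rw [Matrix.mulVec_smul, hP.mulVec_one]

lemma IsStochastic.mulVec_mono (hP : IsStochastic P) : Monotone (P *ᵥ ·) :=
  fun _ _ hfg x ↦ dotProduct_le_dotProduct_of_nonneg_left hfg (hP.1 x)

lemma IsStochastic.mulVec_nonneg (hP : IsStochastic P) {f : V → ℝ} (hf : 0 ≤ f) : 0 ≤ P *ᵥ f :=
  fun x ↦ dotProduct_nonneg_of_nonneg (hP.1 x) hf

lemma IsStochastic.mulVec_le_of_forall_le (hP : IsStochastic P) {f : V → ℝ} {c : ℝ}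
    (hf : ∀ x, f x ≤ c) (x : V) : (P *ᵥ f) x ≤ c := by
  have h := hP.mulVec_mono (show f ≤ c • 1 from fun y ↦ by simpa using hf y) x
  simpa [hP.mulVec_smul_one] using h

lemma IsReversible.nonneg (hπ : IsReversible P π) : 0 ≤ π := fun x ↦ (hπ.1 x).le

lemma IsReversible.dotProduct_one (hπ : IsReversible P π) : π ⬝ᵥ 1 = 1 := by
  rw [_root_.dotProduct_one, hπ.2.1]

lemma IsReversible.dotProduct_sq_nonneg (hπ : IsReversible P π) (f : V → ℝ) :
    0 ≤ π ⬝ᵥ f ^ 2 :=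
  dotProduct_nonneg_of_nonneg hπ.nonneg fun x ↦ sq_nonneg (f x)

lemma IsReversible.mul_sq_le_dotProduct_sq (hπ : IsReversible P π) (f : V → ℝ) (x : V) :
    π x * f x ^ 2 ≤ π ⬝ᵥ f ^ 2 :=
  Finset.single_le_sum (f := fun y ↦ π y * f y ^ 2)
    (fun y _ ↦ mul_nonneg (hπ.1 y).le (sq_nonneg _)) (Finset.mem_univ x)

lemma IsReversible.eq_zero_of_dotProduct_sq_eq_zero (hπ : IsReversible P π) {f : V → ℝ}
    (hf : π ⬝ᵥ f ^ 2 = 0) : f = 0 := by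
  funext x
  have h := hπ.mul_sq_le_dotProduct_sq f x
  rw [hf] at h
  have h0 : f x ^ 2 ≤ 0 := nonpos_of_mul_nonpos_right h (hπ.1 x)
  exact pow_eq_zero_iff two_ne_zero |>.1 (le_antisymm h0 (sq_nonneg _))

lemma IsReversible.dotProduct_mul_mulVec (hπ : IsReversible P π) (f g : V → ℝ) :
    π ⬝ᵥ (f * P *ᵥ g) = π ⬝ᵥ (P *ᵥ f * g) := by
  simp only [dotProduct, Pi.mul_apply, Matrix.mulVec, Finset.mul_sum, Finset.sum_mul]
  rw [Finset.sum_comm]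
  refine Finset.sum_congr rfl fun x _ ↦ Finset.sum_congr rfl fun y _ ↦ ?_
  linear_combination (f y * g x) * hπ.2.2 y x

lemma IsReversible.dotProduct_mulVec (hπ : IsReversible P π) (hP : IsStochastic P) (f : V → ℝ) :
    π ⬝ᵥ (P *ᵥ f) = π ⬝ᵥ f := by
  simpa only [one_mul, hP.mulVec_one] using hπ.dotProduct_mul_mulVec 1 f

lemma IsReversible.dotProduct_sq_sub_mul (hπ : IsReversible P π) (hP : IsStochastic P)
    {ε : ℝ} (hε : ε ^ 2 = 1) (f : V → ℝ) :
    π ⬝ᵥ f ^ 2 - ε * π ⬝ᵥ (f * P *ᵥ f) =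
      1 / 2 * ∑ x, ∑ y, π x * P x y * (f x - ε * f y) ^ 2 := by
  have expand (x y : V) : π x * P x y * (f x - ε * f y) ^ 2 =
      π x * f x ^ 2 * P x y - 2 * ε * (π x * (f x * (P x y * f y)))
        + π x * (P x y * f y ^ 2) := by
    linear_combination π x * P x y * f y ^ 2 * hε
  have cross : ∑ x, π x * (f x * ∑ y, P x y * f y) = π ⬝ᵥ (f * P *ᵥ f) := rfl
  have left : ∑ x, π x * f x ^ 2 = π ⬝ᵥ f ^ 2 := rfl
  have right : ∑ x, π x * ∑ y, P x y * f y ^ 2 = π ⬝ᵥ f ^ 2 :=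
    hπ.dotProduct_mulVec hP fun y ↦ f y ^ 2
  simp only [expand, Finset.sum_add_distrib, Finset.sum_sub_distrib, ← Finset.mul_sum, hP.2,
    mul_one, cross, left, right]
  ring

lemma IsReversible.mul_dotProduct_mul_mulVec_le (hπ : IsReversible P π) (hP : IsStochastic P)
    {ε : ℝ} (hε : ε ^ 2 = 1) (f : V → ℝ) : ε * π ⬝ᵥ (f * P *ᵥ f) ≤ π ⬝ᵥ f ^ 2 := by
  have h0 : 0 ≤ ∑ x, ∑ y, π x * P x y * (f x - ε * f y) ^ 2 :=
    Finset.sum_nonneg fun x _ ↦ Finset.sum_nonneg fun y _ ↦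
      mul_nonneg (mul_nonneg (hπ.1 x).le (hP.1 x y)) (sq_nonneg _)
  linarith [hπ.dotProduct_sq_sub_mul hP hε f]

lemma IsReversible.abs_dotProduct_mul_mulVec_le (hπ : IsReversible P π) (hP : IsStochastic P)
    (f : V → ℝ) : |π ⬝ᵥ (f * P *ᵥ f)| ≤ π ⬝ᵥ f ^ 2 := by
  have h₁ := hπ.mul_dotProduct_mul_mulVec_le hP (one_pow 2) f
  have h₂ := hπ.mul_dotProduct_mul_mulVec_le hP (neg_one_sq (R := ℝ)) f
  exact abs_le.2 ⟨by linarith, by linarith⟩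

lemma lam_nonneg (P : Matrix V V ℝ) (π : V → ℝ) : 0 ≤ lam P π := by
  refine Real.sSup_nonneg ?_
  rintro _ ⟨f, _, _, rfl⟩
  exact abs_nonneg _

lemma IsReversible.abs_dotProduct_mul_mulVec_le_lam (hπ : IsReversible P π)
    (hP : IsStochastic P) {f : V → ℝ} (hf : π ⬝ᵥ f = 0) :
    |π ⬝ᵥ (f * P *ᵥ f)| ≤ lam P π * π ⬝ᵥ f ^ 2 := by
  rcases (hπ.dotProduct_sq_nonneg f).eq_or_lt with h0 | hpos
  · simpa [← h0] using hπ.abs_dotProduct_mul_mulVec_le hP f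
  set q := π ⬝ᵥ f ^ 2
  have hc : (√q)⁻¹ ^ 2 = q⁻¹ := by rw [inv_pow, Real.sq_sqrt hpos.le]
  have bdd : BddAbove {r : ℝ | ∃ f : V → ℝ, ∑ x, π x * f x = 0 ∧ ∑ x, π x * f x ^ 2 = 1 ∧
      r = |∑ x, π x * (f x * ∑ y, P x y * f y)|} := by
    refine ⟨1, ?_⟩
    rintro _ ⟨g, -, hg, rfl⟩
    exact (hπ.abs_dotProduct_mul_mulVec_le hP g).trans_eq hg
  have scaled : |π ⬝ᵥ (((√q)⁻¹ • f) * P *ᵥ ((√q)⁻¹ • f))| ≤ lam P π := by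
    refine le_csSup bdd ⟨(√q)⁻¹ • f, ?_, ?_, rfl⟩
    · change π ⬝ᵥ ((√q)⁻¹ • f) = 0
      rw [dotProduct_smul, hf, smul_zero]
    · change π ⬝ᵥ ((√q)⁻¹ • f) ^ 2 = 1
      rw [smul_pow, dotProduct_smul, hc, smul_eq_mul, inv_mul_cancel₀ hpos.ne']
  rwa [Matrix.mulVec_smul, smul_mul_smul_comm, dotProduct_smul, ← sq, hc, smul_eq_mul, abs_mul,
    abs_of_pos (inv_pos.2 hpos), inv_mul_le_iff₀ hpos, mul_comm q] at scaled

lemma IsReversible.dotProduct_mul_mulVec_le_lam (hπ : IsReversible P π) (hP : IsStochastic P)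
    {f g : V → ℝ} (hf : π ⬝ᵥ f = 0) (hg : π ⬝ᵥ g = 0) :
    π ⬝ᵥ (f * P *ᵥ g) ≤ lam P π / 2 * (π ⬝ᵥ f ^ 2 + π ⬝ᵥ g ^ 2) := by
  have hadd := le_of_abs_le (hπ.abs_dotProduct_mul_mulVec_le_lam hP
    (show π ⬝ᵥ (f + g) = 0 by rw [dotProduct_add, hf, hg, add_zero]))
  have hsub := neg_le_of_abs_le (hπ.abs_dotProduct_mul_mulVec_le_lam hP
    (show π ⬝ᵥ (f - g) = 0 by rw [dotProduct_sub, hf, hg, sub_zero]))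
  have polarization : π ⬝ᵥ ((f + g) * P *ᵥ (f + g)) - π ⬝ᵥ ((f - g) * P *ᵥ (f - g)) =
      4 * π ⬝ᵥ (f * P *ᵥ g) := by
    have symm : π ⬝ᵥ (g * P *ᵥ f) = π ⬝ᵥ (f * P *ᵥ g) := by
      rw [hπ.dotProduct_mul_mulVec f g, mul_comm]
    simp only [Matrix.mulVec_add, Matrix.mulVec_sub, add_mul, sub_mul, mul_add, mul_sub,
      dotProduct_add, dotProduct_sub, symm]
    ring
  have parallelogram : π ⬝ᵥ (f + g) ^ 2 + π ⬝ᵥ (f - g) ^ 2 =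
      2 * (π ⬝ᵥ f ^ 2 + π ⬝ᵥ g ^ 2) := by
    rw [← dotProduct_add, ← dotProduct_add, ← smul_eq_mul, ← dotProduct_smul]
    congr 1
    funext x
    simp only [Pi.add_apply, Pi.sub_apply, Pi.pow_apply, Pi.smul_apply, smul_eq_mul]
    ring
  linear_combination 1 / 4 * (hadd + hsub - polarization + lam P π * parallelogram)

lemma IsReversible.dotProduct_mulVec_sq_le (hπ : IsReversible P π) (hP : IsStochastic P)
    {f : V → ℝ} (hf : π ⬝ᵥ f = 0) : π ⬝ᵥ (P *ᵥ f) ^ 2 ≤ lam P π ^ 2 * π ⬝ᵥ f ^ 2 := by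
  have hPf : π ⬝ᵥ (P *ᵥ f) = 0 := by rw [hπ.dotProduct_mulVec hP, hf]
  rcases (lam_nonneg P π).eq_or_lt with h0 | hpos
  · simpa [← h0, ← sq] using hπ.dotProduct_mul_mulVec_le_lam hP hPf hf
  -- Testing the bilinear bound on the pair `(P f, λ f)` balances its two sides.
  have h := hπ.dotProduct_mul_mulVec_le_lam hP hPf
    (show π ⬝ᵥ (lam P π • f) = 0 by rw [dotProduct_smul, hf, smul_zero])
  simp only [Matrix.mulVec_smul, mul_smul_comm, smul_pow, dotProduct_smul, smul_eq_mul,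
    ← sq] at h
  refine le_of_mul_le_mul_left ?_ hpos
  linarith

lemma IsReversible.isCompact_sphere_inter_mean_zero (hπ : IsReversible P π) :
    IsCompact {f : V → ℝ | π ⬝ᵥ f = 0 ∧ π ⬝ᵥ f ^ 2 = 1} := by
  have hclosed : IsClosed {f : V → ℝ | π ⬝ᵥ f = 0 ∧ π ⬝ᵥ f ^ 2 = 1} := by
    simp only [dotProduct, Pi.pow_apply]
    exact (isClosed_eq (by fun_prop) (by fun_prop)).inter
      (isClosed_eq (by fun_prop) (by fun_prop))
  have hbox : IsCompact (Set.univ.pi fun x ↦ Set.Icc (-√(1 / π x)) √(1 / π x)) :=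
    isCompact_univ_pi fun x ↦ isCompact_Icc
  refine hbox.of_isClosed_subset hclosed fun f hf x _ ↦ abs_le.1 (Real.abs_le_sqrt ?_)
  rw [le_div_iff₀' (hπ.1 x), ← hf.2]
  exact hπ.mul_sq_le_dotProduct_sq f x

end Reversible

section Gap

variable {V : Type*} [Fintype V] [DecidableEq V] {P : Matrix V V ℝ} {π : V → ℝ}

lemma IsStochastic.pow_apply_nonneg (hP : IsStochastic P) (t : ℕ) (x y : V) :
    0 ≤ (P ^ t) x y :=
  Matrix.nonneg_of_mem_rowStochastic (pow_mem (Matrix.mem_rowStochastic_iff_sum.2 hP) t)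

lemma IsStochastic.pow_succ_apply_pos (hP : IsStochastic P) {t : ℕ} {x y z : V}
    (hxz : 0 < P x z) (hzy : 0 < (P ^ t) z y) : 0 < (P ^ (t + 1)) x y := by
  rw [pow_succ', Matrix.mul_apply]
  exact Finset.sum_pos' (fun v _ ↦ mul_nonneg (hP.1 x v) (hP.pow_apply_nonneg t v y))
    ⟨z, Finset.mem_univ z, mul_pos hxz hzy⟩

lemma IsStochastic.eq_pow_mul_of_pow_apply_pos (hP : IsStochastic P) {f : V → ℝ} {ε : ℝ}
    (hf : ∀ x y, 0 < P x y → f x = ε * f y) (t : ℕ) {x y : V} (hxy : 0 < (P ^ t) x y) :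
    f x = ε ^ t * f y := by
  induction t generalizing x with
  | zero =>
    obtain rfl : x = y := by
      by_contra hne
      simp [Matrix.one_apply_ne hne] at hxy
    simp
  | succ t ih =>
    rw [pow_succ', Matrix.mul_apply] at hxy
    obtain ⟨z, -, hz⟩ := Finset.exists_lt_of_sum_lt (Finset.sum_const_zero.trans_lt hxy)
    have hxz : 0 < P x z := pos_of_mul_pos_left hz (hP.pow_apply_nonneg t z y)
    have hzy : 0 < (P ^ t) z y := pos_of_mul_pos_right hz (hP.1 x z)
    rw [hf x z hxz, ih hzy, pow_succ', mul_assoc]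

lemma IsReversible.eq_zero_of_forall_eq_mul (hπ : IsReversible P π) (hP : IsStochastic P)
    (hirr : IsIrreducible P) (haper : IsAperiodic P) {ε : ℝ} (hε : ε ^ 2 = 1) {f : V → ℝ}
    (hmean : π ⬝ᵥ f = 0) (hf : ∀ x y, 0 < P x y → f x = ε * f y) : f = 0 := by
  funext x
  rcases sq_eq_one_iff.1 hε with rfl | rfl
  · have hconst : f = f x • 1 := funext fun y ↦ by
      obtain ⟨t, ht⟩ := hirr y x
      simpa using hP.eq_pow_mul_of_pow_apply_pos hf t ht
    rw [hconst, dotProduct_smul, hπ.dotProduct_one, smul_eq_mul, mul_one] at hmean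
    exact hmean
  · -- A nonzero value would change sign at every step, so all return times would be even.
    by_contra hx
    have heven (t : ℕ) (ht : 0 < (P ^ t) x x) : 2 ∣ t := by
      have h := hP.eq_pow_mul_of_pow_apply_pos hf t ht
      rw [eq_comm, mul_eq_right₀ hx] at h
      exact even_iff_two_dvd.1 ((neg_one_pow_eq_one_iff_even (by norm_num)).1 h)
    exact absurd (haper x 2 heven) (by norm_num)

lemma IsReversible.mul_dotProduct_mul_mulVec_lt (hπ : IsReversible P π) (hP : IsStochastic P)
    (hirr : IsIrreducible P) (haper : IsAperiodic P) {ε : ℝ} (hε : ε ^ 2 = 1) {f : V → ℝ}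
    (hmean : π ⬝ᵥ f = 0) (hne : f ≠ 0) : ε * π ⬝ᵥ (f * P *ᵥ f) < π ⬝ᵥ f ^ 2 := by
  refine (hπ.mul_dotProduct_mul_mulVec_le hP hε f).lt_of_ne fun heq ↦ hne ?_
  have hsum : ∑ x, ∑ y, π x * P x y * (f x - ε * f y) ^ 2 = 0 := by
    linarith [hπ.dotProduct_sq_sub_mul hP hε f]
  have hnn (x y : V) : 0 ≤ π x * P x y * (f x - ε * f y) ^ 2 :=
    mul_nonneg (mul_nonneg (hπ.1 x).le (hP.1 x y)) (sq_nonneg _)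
  refine hπ.eq_zero_of_forall_eq_mul hP hirr haper hε hmean fun x y hxy ↦ ?_
  have hterm : π x * P x y * (f x - ε * f y) ^ 2 = 0 :=
    (Finset.sum_eq_zero_iff_of_nonneg fun y _ ↦ hnn x y).1
      ((Finset.sum_eq_zero_iff_of_nonneg fun x _ ↦ Finset.sum_nonneg fun y _ ↦ hnn x y).1
        hsum x (Finset.mem_univ x)) y (Finset.mem_univ y)
  have hsq := (mul_eq_zero.1 hterm).resolve_left (mul_pos (hπ.1 x) hxy).ne'
  exact sub_eq_zero.1 (pow_eq_zero_iff two_ne_zero |>.1 hsq)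

lemma IsReversible.lam_lt_one (hπ : IsReversible P π) (hP : IsStochastic P)
    (hirr : IsIrreducible P) (haper : IsAperiodic P) : lam P π < 1 := by
  set K := {f : V → ℝ | π ⬝ᵥ f = 0 ∧ π ⬝ᵥ f ^ 2 = 1}
  have hlam : lam P π = sSup ((fun f ↦ |π ⬝ᵥ (f * P *ᵥ f)|) '' K) := by
    refine congrArg sSup (Set.ext fun r ↦ ?_)
    exact ⟨fun ⟨f, h₀, h₁, hr⟩ ↦ ⟨f, ⟨h₀, h₁⟩, hr.symm⟩,
      fun ⟨f, ⟨h₀, h₁⟩, hr⟩ ↦ ⟨f, h₀, h₁, hr.symm⟩⟩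
  rw [hlam]
  rcases K.eq_empty_or_nonempty with hK | hK
  · rw [hK, Set.image_empty, Real.sSup_empty]
    exact zero_lt_one
  have hcont : Continuous fun f : V → ℝ ↦ |π ⬝ᵥ (f * P *ᵥ f)| := by
    simp only [dotProduct, Pi.mul_apply, Matrix.mulVec]
    fun_prop
  rw [hπ.isCompact_sphere_inter_mean_zero.sSup_lt_iff_of_continuous hK hcont.continuousOn]
  rintro f ⟨hmean, hnorm⟩
  have hne : f ≠ 0 := by
    rintro rfl
    simp at hnorm
  have h₁ := hπ.mul_dotProduct_mul_mulVec_lt hP hirr haper (one_pow 2) hmean hne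
  have h₂ := hπ.mul_dotProduct_mul_mulVec_lt hP hirr haper (neg_one_sq (R := ℝ)) hmean hne
  exact abs_lt.2 ⟨by linarith, by linarith⟩

end Gap

section Poincare

variable {V : Type*} [Fintype V] {P : Matrix V V ℝ} {π : V → ℝ}

/-- The variance of `f` under `π`, which measures the distance of `f` from equilibrium. -/
noncomputable def variance (π f : V → ℝ) : ℝ :=
  π ⬝ᵥ (f - (π ⬝ᵥ f) • 1) ^ 2

/-- The Dirichlet form `ℰ(f, f) = ⟨f, (1 - P) f⟩_π` of the chain. -/
noncomputable def dirichletForm (P : Matrix V V ℝ) (π f : V → ℝ) : ℝ :=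
  π ⬝ᵥ (f * (f - P *ᵥ f))

lemma IsReversible.dotProduct_sub_mean (hπ : IsReversible P π) (f : V → ℝ) :
    π ⬝ᵥ (f - (π ⬝ᵥ f) • 1) = 0 := by
  rw [dotProduct_sub, dotProduct_smul, hπ.dotProduct_one, smul_eq_mul, mul_one, sub_self]

lemma IsReversible.variance_nonneg (hπ : IsReversible P π) (f : V → ℝ) : 0 ≤ variance π f :=
  hπ.dotProduct_sq_nonneg _

lemma IsReversible.mul_sq_sub_mean_le_variance (hπ : IsReversible P π) (f : V → ℝ) (x : V) :
    π x * (f x - π ⬝ᵥ f) ^ 2 ≤ variance π f := by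
  simpa [variance] using hπ.mul_sq_le_dotProduct_sq (f - (π ⬝ᵥ f) • 1) x

lemma IsReversible.dirichletForm_eq (hπ : IsReversible P π) (hP : IsStochastic P) (f : V → ℝ)
    (c : ℝ) : dirichletForm P π f = π ⬝ᵥ ((f - c • 1) * (f - P *ᵥ f)) := by
  have h : π ⬝ᵥ (f - P *ᵥ f) = 0 := by rw [dotProduct_sub, hπ.dotProduct_mulVec hP, sub_self]
  rw [sub_mul, smul_one_mul, dotProduct_sub, dotProduct_smul, h, smul_zero, sub_zero,
    dirichletForm]

lemma IsReversible.one_sub_lam_mul_variance_le (hπ : IsReversible P π) (hP : IsStochastic P)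
    (f : V → ℝ) : (1 - lam P π) * variance π f ≤ dirichletForm P π f := by
  have h := le_of_abs_le
    (hπ.abs_dotProduct_mul_mulVec_le_lam hP (hπ.dotProduct_sub_mean f))
  have split : f - P *ᵥ f =
      (f - (π ⬝ᵥ f) • 1) - P *ᵥ (f - (π ⬝ᵥ f) • 1) := by
    rw [Matrix.mulVec_sub, hP.mulVec_smul_one, sub_sub_sub_cancel_right]
  rw [hπ.dirichletForm_eq hP f (π ⬝ᵥ f), split, mul_sub, dotProduct_sub, ← sq, ← variance]
  rw [← variance] at h
  linarith

lemma IsReversible.variance_mulVec_le (hπ : IsReversible P π) (hP : IsStochastic P)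
    (f : V → ℝ) : variance π (P *ᵥ f) ≤ lam P π ^ 2 * variance π f := by
  have h := hπ.dotProduct_mulVec_sq_le hP (hπ.dotProduct_sub_mean f)
  rwa [Matrix.mulVec_sub, hP.mulVec_smul_one, ← hπ.dotProduct_mulVec hP f, ← variance,
    hπ.dotProduct_mulVec hP f, ← variance] at h

variable [DecidableEq V]

lemma IsReversible.dotProduct_pow_mulVec (hπ : IsReversible P π) (hP : IsStochastic P)
    (f : V → ℝ) (t : ℕ) : π ⬝ᵥ ((P ^ t) *ᵥ f) = π ⬝ᵥ f := by
  induction t with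
  | zero => rw [pow_zero, Matrix.one_mulVec]
  | succ t ih => rw [pow_succ', ← Matrix.mulVec_mulVec, hπ.dotProduct_mulVec hP, ih]

lemma IsReversible.variance_pow_mulVec_le (hπ : IsReversible P π) (hP : IsStochastic P)
    (f : V → ℝ) (t : ℕ) : variance π ((P ^ t) *ᵥ f) ≤ (lam P π ^ t) ^ 2 * variance π f := by
  induction t with
  | zero => simp
  | succ t ih =>
    calc variance π ((P ^ (t + 1)) *ᵥ f)
        = variance π (P *ᵥ ((P ^ t) *ᵥ f)) := by rw [pow_succ', ← Matrix.mulVec_mulVec]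
      _ ≤ lam P π ^ 2 * variance π ((P ^ t) *ᵥ f) := hπ.variance_mulVec_le hP _
      _ ≤ lam P π ^ 2 * ((lam P π ^ t) ^ 2 * variance π f) := by gcongr
      _ = (lam P π ^ (t + 1)) ^ 2 * variance π f := by ring

end Poincare

section StationaryMass

variable {V : Type*} {P : Matrix V V ℝ} {π : V → ℝ}

lemma pimin_le [Finite V] (π : V → ℝ) (x : V) : pimin π ≤ π x :=
  ciInf_le (Set.finite_range π).bddBelow x

lemma le_pimax [Finite V] (π : V → ℝ) (x : V) : π x ≤ pimax π :=
  le_ciSup (Set.finite_range π).bddAbove x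

variable [Fintype V]

lemma IsReversible.pimin_pos [Nonempty V] (hπ : IsReversible P π) : 0 < pimin π := by
  obtain ⟨x, hx⟩ := exists_eq_ciInf_of_finite (f := π)
  exact (hπ.1 x).trans_eq hx

lemma IsReversible.le_one (hπ : IsReversible P π) (x : V) : π x ≤ 1 :=
  hπ.2.1 ▸ Finset.single_le_sum (fun y _ ↦ (hπ.1 y).le) (Finset.mem_univ x)

lemma IsReversible.piOf_pos (hπ : IsReversible P π) {S : Set V} (hS : S.Nonempty) :
    0 < piOf π S := by
  obtain ⟨x, hx⟩ := hS
  refine Finset.sum_pos' (fun y _ ↦ Set.indicator_nonneg (fun z _ ↦ (hπ.1 z).le) y)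
    ⟨x, Finset.mem_univ x, ?_⟩
  rw [Set.indicator_of_mem hx]
  exact hπ.1 x

lemma IsReversible.piOf_le_one (hπ : IsReversible P π) (S : Set V) : piOf π S ≤ 1 :=
  hπ.2.1 ▸ Finset.sum_le_sum fun x _ ↦ Set.indicator_le_self' (fun _ _ ↦ (hπ.1 x).le) x

end StationaryMass

section HittingTime

variable {V : Type*} [Fintype V] {P : Matrix V V ℝ} {π : V → ℝ} {S : Set V}

lemma IsReversible.eq_zero_of_eq_indicator_mulVec (hπ : IsReversible P π) (hP : IsStochastic P)
    (hlam : lam P π < 1) (hS : S.Nonempty) {v : V → ℝ} (hv : v = Sᶜ.indicator (P *ᵥ v)) :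
    v = 0 := by
  have henergy : dirichletForm P π v = 0 := by
    refine Finset.sum_eq_zero fun x _ ↦ mul_eq_zero_of_right _ (mul_eq_zero.2 ?_)
    by_cases hx : x ∈ S
    · exact .inl (by rw [hv, Set.indicator_of_notMem (by simpa using hx)])
    · refine .inr (sub_eq_zero.2 ?_)
      conv_lhs => rw [hv]
      exact Set.indicator_of_mem hx _
  have hvar : variance π v = 0 := by
    have h := hπ.one_sub_lam_mul_variance_le hP v
    rw [henergy] at h
    exact le_antisymm (nonpos_of_mul_nonpos_right h (sub_pos.2 hlam)) (hπ.variance_nonneg v)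
  have hconst : v = (π ⬝ᵥ v) • 1 := sub_eq_zero.1 (hπ.eq_zero_of_dotProduct_sq_eq_zero hvar)
  obtain ⟨s, hs⟩ := hS
  have hmean : π ⬝ᵥ v = 0 := by
    have h := congrFun hconst s
    rw [hv, Set.indicator_of_notMem (by simpa using hs), ← hv] at h
    simpa using h.symm
  rw [hconst, hmean, zero_smul]

/-- The first-step equations `w = 0` on `S` and `w = 1 + P w` off `S`, whose solution is the
mean hitting time `y ↦ 𝔼_y[T_S]`. -/
def IsMeanHit (P : Matrix V V ℝ) (S : Set V) (w : V → ℝ) : Prop :=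
  w = Sᶜ.indicator (1 + P *ᵥ w)

lemma IsReversible.exists_isMeanHit (hπ : IsReversible P π) (hP : IsStochastic P)
    (hlam : lam P π < 1) (hS : S.Nonempty) : ∃ w, IsMeanHit P S w := by
  classical
  set M : Matrix V V ℝ := 1 - Matrix.diagonal (Sᶜ.indicator 1) * P with hM
  have hMv (v : V → ℝ) : M *ᵥ v = v - Sᶜ.indicator (P *ᵥ v) := by
    rw [hM, Matrix.sub_mulVec, Matrix.one_mulVec, ← Matrix.mulVec_mulVec]
    congr 1
    funext x
    by_cases hx : x ∈ S <;> simp [Matrix.mulVec_diagonal, hx]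
  have hinj : Function.Injective M.mulVec := fun u v huv ↦ sub_eq_zero.1 <| by
    refine hπ.eq_zero_of_eq_indicator_mulVec hP hlam hS (sub_eq_zero.1 ?_)
    rw [← hMv, Matrix.mulVec_sub]
    exact sub_eq_zero.2 huv
  have hsurj := Matrix.mulVec_surjective_iff_isUnit.2 (Matrix.mulVec_injective_iff_isUnit.1 hinj)
  obtain ⟨w, hw⟩ := hsurj (Sᶜ.indicator 1)
  refine ⟨w, ?_⟩
  rw [IsMeanHit, Set.indicator_add', ← hw, hMv, sub_add_cancel]

variable {w : V → ℝ}

lemma IsMeanHit.apply_of_mem (hw : IsMeanHit P S w) {x : V} (hx : x ∈ S) : w x = 0 := by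
  rw [hw, Set.indicator_of_notMem (by simpa using hx)]

lemma IsMeanHit.apply_of_notMem (hw : IsMeanHit P S w) {x : V} (hx : x ∉ S) :
    w x = 1 + (P *ᵥ w) x :=
  (congrFun hw x).trans (Set.indicator_of_mem hx _)

lemma IsMeanHit.nonneg (hw : IsMeanHit P S w) (hP : IsStochastic P) : 0 ≤ w := by
  intro x
  have : Nonempty V := ⟨x⟩
  obtain ⟨m, hm⟩ := Finite.exists_min w
  have hPm : w m ≤ (P *ᵥ w) m := by
    have h := hP.mulVec_mono (show w m • 1 ≤ w from fun y ↦ by simpa using hm y) m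
    simpa [hP.mulVec_smul_one] using h
  by_cases hmS : m ∈ S
  · exact (hw.apply_of_mem hmS).symm.trans_le (hm x)
  · linarith [hw.apply_of_notMem hmS]

lemma IsMeanHit.le_one_add_mulVec (hw : IsMeanHit P S w) (hP : IsStochastic P) :
    w ≤ 1 + P *ᵥ w := by
  intro x
  by_cases hx : x ∈ S
  · rw [hw.apply_of_mem hx]
    exact add_nonneg zero_le_one (hP.mulVec_nonneg (hw.nonneg hP) x)
  · exact (hw.apply_of_notMem hx).le

lemma IsMeanHit.dirichletForm_eq (hw : IsMeanHit P S w) (π : V → ℝ) :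
    dirichletForm P π w = π ⬝ᵥ w := by
  refine Finset.sum_congr rfl fun x _ ↦ congrArg (π x * ·) ?_
  by_cases hx : x ∈ S
  · simp [hw.apply_of_mem hx]
  · simp [hw.apply_of_notMem hx]

lemma IsMeanHit.one_sub_lam_mul_variance_le (hw : IsMeanHit P S w) (hπ : IsReversible P π)
    (hP : IsStochastic P) : (1 - lam P π) * variance π w ≤ π ⬝ᵥ w :=
  (hπ.one_sub_lam_mul_variance_le hP w).trans_eq (hw.dirichletForm_eq π)

lemma IsMeanHit.piOf_mul_sq_mean_le_variance (hw : IsMeanHit P S w) (hπ : IsReversible P π) :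
    piOf π S * (π ⬝ᵥ w) ^ 2 ≤ variance π w := by
  rw [piOf, Finset.sum_mul]
  refine Finset.sum_le_sum fun x _ ↦ ?_
  by_cases hx : x ∈ S
  · simp [hx, hw.apply_of_mem hx]
  · simpa [hx] using mul_nonneg (hπ.1 x).le (sq_nonneg _)

lemma IsMeanHit.one_sub_lam_mul_mean_le (hw : IsMeanHit P S w) (hπ : IsReversible P π)
    (hP : IsStochastic P) (hlam : lam P π < 1) (hS : S.Nonempty) :
    (1 - lam P π) * π ⬝ᵥ w ≤ (piOf π S)⁻¹ := by
  have : 0 < 1 - lam P π := sub_pos.2 hlam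
  rcases (dotProduct_nonneg_of_nonneg hπ.nonneg (hw.nonneg hP)).eq_or_lt with h0 | hpos
  · rw [← h0, mul_zero]
    exact (inv_pos.2 (hπ.piOf_pos hS)).le
  rw [← mul_le_mul_iff_of_pos_left hpos, ← div_eq_mul_inv, le_div_iff₀ (hπ.piOf_pos hS)]
  calc π ⬝ᵥ w * ((1 - lam P π) * π ⬝ᵥ w) * piOf π S
      = (1 - lam P π) * (piOf π S * (π ⬝ᵥ w) ^ 2) := by ring
    _ ≤ (1 - lam P π) * variance π w := by
        gcongr
        exact hw.piOf_mul_sq_mean_le_variance hπ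
    _ ≤ π ⬝ᵥ w := hw.one_sub_lam_mul_variance_le hπ hP

lemma IsMeanHit.le_add_pow_mulVec [DecidableEq V] (hw : IsMeanHit P S w)
    (hP : IsStochastic P) (t : ℕ) : w ≤ (t : ℝ) • 1 + (P ^ t) *ᵥ w := by
  induction t with
  | zero => simp
  | succ t ih =>
    calc w ≤ 1 + P *ᵥ w := hw.le_one_add_mulVec hP
      _ ≤ 1 + P *ᵥ ((t : ℝ) • 1 + (P ^ t) *ᵥ w) := add_le_add_right (hP.mulVec_mono ih) 1
      _ = ((t + 1 : ℕ) : ℝ) • 1 + (P ^ (t + 1)) *ᵥ w := by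
          rw [Matrix.mulVec_add, hP.mulVec_smul_one, Matrix.mulVec_mulVec, ← pow_succ', ← add_assoc,
            Nat.cast_succ, add_smul, one_smul, add_comm 1]

lemma IsMeanHit.one_sub_lam_mul_pow_mulVec_sub_mean_le [DecidableEq V]
    (hw : IsMeanHit P S w) (hπ : IsReversible P π) (hP : IsStochastic P) (hlam : lam P π < 1)
    (hS : S.Nonempty) {t : ℕ} (ht : lam P π ^ t ≤ pimin π) (x : V) :
    (1 - lam P π) * (((P ^ t) *ᵥ w) x - π ⬝ᵥ w) ≤ (piOf π S)⁻¹ := by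
  have : Nonempty V := ⟨x⟩
  set p := pimin π
  set v := ((P ^ t) *ᵥ w) x
  have hp : 0 < p := hπ.pimin_pos
  have hp1 : p ≤ 1 := (pimin_le π x).trans (hπ.le_one x)
  have : 0 < 1 - lam P π := sub_pos.2 hlam
  have hR : 1 ≤ (piOf π S)⁻¹ := (one_le_inv₀ (hπ.piOf_pos hS)).2 (hπ.piOf_le_one S)
  have hsq : (v - π ⬝ᵥ w) ^ 2 ≤ variance π w := by
    refine le_of_mul_le_mul_left ?_ hp
    calc p * (v - π ⬝ᵥ w) ^ 2
        ≤ π x * (v - π ⬝ᵥ w) ^ 2 := by gcongr; exact pimin_le π x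
      _ ≤ variance π ((P ^ t) *ᵥ w) := by
          simpa only [hπ.dotProduct_pow_mulVec hP] using
            hπ.mul_sq_sub_mean_le_variance ((P ^ t) *ᵥ w) x
      _ ≤ (lam P π ^ t) ^ 2 * variance π w := hπ.variance_pow_mulVec_le hP w t
      _ ≤ p * variance π w := by
          gcongr
          · exact hπ.variance_nonneg w
          · nlinarith [pow_nonneg (lam_nonneg P π) t]
  refine le_of_sq_le_sq ?_ (zero_le_one.trans hR)
  calc ((1 - lam P π) * (v - π ⬝ᵥ w)) ^ 2
      = (1 - lam P π) * ((1 - lam P π) * (v - π ⬝ᵥ w) ^ 2) := by ring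
    _ ≤ (1 - lam P π) * ((1 - lam P π) * variance π w) := by gcongr
    _ ≤ (1 - lam P π) * π ⬝ᵥ w := by
        gcongr
        exact hw.one_sub_lam_mul_variance_le hπ hP
    _ ≤ (piOf π S)⁻¹ := hw.one_sub_lam_mul_mean_le hπ hP hlam hS
    _ ≤ (piOf π S)⁻¹ ^ 2 := le_self_pow₀ hR two_ne_zero

lemma exists_pow_le_and_le_log_div {r p : ℝ} (hr : 0 ≤ r) (hr1 : r < 1) (hp : 0 < p)
    (hp1 : p ≤ 1) :
    ∃ t : ℕ, r ^ t ≤ p ∧ t ≤ Real.log (1 / p) / (1 - r) + 1 := by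
  have hgap : 0 < 1 - r := sub_pos.2 hr1
  have hlog : 0 ≤ Real.log (1 / p) := Real.log_nonneg ((one_le_div hp).2 hp1)
  refine ⟨⌈Real.log (1 / p) / (1 - r)⌉₊, ?_, (Nat.ceil_lt_add_one (by positivity)).le⟩
  set t := ⌈Real.log (1 / p) / (1 - r)⌉₊
  have ht : Real.log (1 / p) ≤ t * (1 - r) := (div_le_iff₀ hgap).1 (Nat.le_ceil _)
  calc r ^ t = (1 - (1 - r)) ^ t := by rw [sub_sub_cancel]
    _ ≤ Real.exp (-(1 - r)) ^ t := by
        gcongr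
        · linarith
        · exact Real.one_sub_le_exp_neg _
    _ = Real.exp (-(t * (1 - r))) := by rw [← Real.exp_nat_mul, mul_neg]
    _ ≤ Real.exp (-Real.log (1 / p)) := by gcongr
    _ = p := by rw [one_div, Real.log_inv, neg_neg, Real.exp_log hp]

lemma IsMeanHit.apply_le (hw : IsMeanHit P S w) (hπ : IsReversible P π) (hP : IsStochastic P)
    (hlam : lam P π < 1) (hS : S.Nonempty) (x : V) :
    w x ≤ (Real.log (1 / pimin π) + 1 + 2 * (piOf π S)⁻¹) / (1 - lam P π) := by
  classical
  have : Nonempty V := ⟨x⟩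
  have hgap : 0 < 1 - lam P π := sub_pos.2 hlam
  obtain ⟨t, hpow, ht⟩ := exists_pow_le_and_le_log_div (lam_nonneg P π) hlam hπ.pimin_pos
    ((pimin_le π x).trans (hπ.le_one x))
  have hmean := hw.one_sub_lam_mul_mean_le hπ hP hlam hS
  have hdev := hw.one_sub_lam_mul_pow_mulVec_sub_mean_le hπ hP hlam hS hpow x
  have hdecay : w x ≤ t + ((P ^ t) *ᵥ w) x := by simpa using hw.le_add_pow_mulVec hP t x
  rw [← sub_le_iff_le_add, le_div_iff₀ hgap] at ht
  rw [le_div_iff₀ hgap]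
  calc w x * (1 - lam P π) ≤ (t + ((P ^ t) *ᵥ w) x) * (1 - lam P π) := by gcongr
    _ ≤ Real.log (1 / pimin π) + 1 + 2 * (piOf π S)⁻¹ := by
        linarith [lam_nonneg P π]

end HittingTime

section HarmonicFunctions

variable {V : Type*} [Fintype V] {P : Matrix V V ℝ} {π : V → ℝ} {S : Set V}

lemma IsMeanHit.dotProduct_eq_of_harmonic [DecidableEq V] {w : V → ℝ} (hw : IsMeanHit P S w)
    (hπ : IsReversible P π) {g : V → ℝ} {x : V} (hx : x ∈ S)
    (hgS : ∀ y ∈ S, g y = if y = x then 1 else 0) (hg : ∀ y ∉ S, g y = (P *ᵥ g) y) :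
    π ⬝ᵥ g = π x * (1 + (P *ᵥ w) x) := by
  have green : π ⬝ᵥ (g * (w - P *ᵥ w)) = 0 := by
    rw [mul_sub, dotProduct_sub, hπ.dotProduct_mul_mulVec, ← dotProduct_sub, ← sub_mul]
    refine Finset.sum_eq_zero fun y _ ↦ mul_eq_zero_of_right _ ?_
    by_cases hy : y ∈ S
    · simp [hw.apply_of_mem hy]
    · simp [hg y hy]
  have split : g - g * (w - P *ᵥ w) = Pi.single x (1 + (P *ᵥ w) x) := by
    funext y
    by_cases hy : y ∈ S
    · rcases eq_or_ne y x with rfl | hyx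
      · simp [hgS y hy, hw.apply_of_mem hy]
      · simp [hgS y hy, hyx]
    · simp [hw.apply_of_notMem hy, Pi.single_eq_of_ne (ne_of_mem_of_not_mem hx hy).symm]
  rw [← dotProduct_single, ← split, dotProduct_sub, green, sub_zero]

lemma IsReversible.dirichletForm_eq_of_harmonic (hπ : IsReversible P π) (hP : IsStochastic P)
    {g : V → ℝ} {x y : V} (hgx : g x = 0) (hgy : g y = 1)
    (hg : ∀ z, z ≠ x → z ≠ y → g z = (P *ᵥ g) z) :
    dirichletForm P π g = π x * (P *ᵥ g) x := by
  rw [hπ.dirichletForm_eq hP g 1]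
  refine (Fintype.sum_eq_single x fun z hzx ↦ mul_eq_zero_of_right _ ?_).trans ?_
  · rcases eq_or_ne z y with rfl | hzy
    · simp [hgy]
    · simp [← hg z hzx hzy]
  · simp [hgx]

lemma IsReversible.sq_add_sq_le_variance (hπ : IsReversible P π) (g : V → ℝ) {x y : V}
    (hxy : x ≠ y) :
    π x * (g x - π ⬝ᵥ g) ^ 2 + π y * (g y - π ⬝ᵥ g) ^ 2 ≤ variance π g := by
  classical
  rw [← Finset.sum_pair (f := fun z ↦ π z * (g z - π ⬝ᵥ g) ^ 2) hxy]
  refine (Finset.sum_le_univ_sum_of_nonneg fun z ↦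
    mul_nonneg (hπ.1 z).le (sq_nonneg _)).trans_eq ?_
  simp [variance, dotProduct]

lemma IsReversible.pimin_div_two_le_variance (hπ : IsReversible P π) {g : V → ℝ} {x y : V}
    (hgx : g x = 0) (hgy : g y = 1) : pimin π / 2 ≤ variance π g := by
  have : Nonempty V := ⟨x⟩
  have hxy : x ≠ y := fun h ↦ zero_ne_one (hgx.symm.trans (h ▸ hgy))
  have hpos := hπ.pimin_pos
  calc pimin π / 2 ≤ pimin π * (0 - π ⬝ᵥ g) ^ 2 + pimin π * (1 - π ⬝ᵥ g) ^ 2 := by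
        nlinarith [sq_nonneg (2 * π ⬝ᵥ g - 1)]
    _ ≤ π x * (g x - π ⬝ᵥ g) ^ 2 + π y * (g y - π ⬝ᵥ g) ^ 2 := by
        rw [hgx, hgy]
        gcongr <;> exact pimin_le π _
    _ ≤ variance π g := hπ.sq_add_sq_le_variance g hxy

lemma IsReversible.le_mulVec_of_harmonic (hπ : IsReversible P π) (hP : IsStochastic P)
    (hlam : lam P π < 1) {g : V → ℝ} {x y : V} (hgx : g x = 0) (hgy : g y = 1)
    (hg : ∀ z, z ≠ x → z ≠ y → g z = (P *ᵥ g) z) :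
    (1 - lam P π) * pimin π / (2 * pimax π) ≤ (P *ᵥ g) x := by
  have hgap : 0 ≤ 1 - lam P π := sub_nonneg.2 hlam.le
  have : Nonempty V := ⟨x⟩
  have hπx := hπ.1 x
  have hmass : (1 - lam P π) * pimin π / 2 ≤ π x * (P *ᵥ g) x :=
    calc (1 - lam P π) * pimin π / 2 = (1 - lam P π) * (pimin π / 2) := by ring
      _ ≤ (1 - lam P π) * variance π g := by
          gcongr
          exact hπ.pimin_div_two_le_variance hgx hgy
      _ ≤ π x * (P *ᵥ g) x := (hπ.one_sub_lam_mul_variance_le hP g).trans_eq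
          (hπ.dirichletForm_eq_of_harmonic hP hgx hgy hg)
  calc (1 - lam P π) * pimin π / (2 * pimax π)
      ≤ (1 - lam P π) * pimin π / (2 * π x) := by
        gcongr
        · exact mul_nonneg hgap hπ.pimin_pos.le
        · exact le_pimax π x
    _ ≤ (P *ᵥ g) x := by
        rw [div_le_iff₀ (by positivity)]
        linarith

end HarmonicFunctions

section Paths

variable {V : Type*} {S : Set V} {ω : ℕ → V} {x y : V}

lemma sInf_image_natCast_eq_iff {A : Set ℕ} {n : ℕ} :
    sInf ((↑) '' A : Set ℕ∞) = n ↔ IsLeast A n := by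
  refine ⟨fun h ↦ ?_, fun h ↦ (Nat.mono_cast.map_isLeast h).csInf_eq⟩
  have hne : ((↑) '' A : Set ℕ∞).Nonempty := by
    rw [Set.nonempty_iff_ne_empty]
    rintro hempty
    simp [hempty] at h
  obtain ⟨m, hm, hmn⟩ := csInf_mem hne
  rw [h, Nat.cast_inj] at hmn
  subst hmn
  exact ⟨hm, fun k hk ↦ Nat.cast_le.1 (h ▸ sInf_le (Set.mem_image_of_mem _ hk))⟩

lemma sInf_image_natCast_lt_iff {A B : Set ℕ} :
    sInf ((↑) '' A : Set ℕ∞) < sInf ((↑) '' B) ↔ ∃ n ∈ A, ∀ m ∈ B, n < m := by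
  have hlt (n : ℕ) : (n : ℕ∞) < sInf ((↑) '' B) ↔ ∀ m ∈ B, n < m := by
    rw [← ENat.add_one_le_iff (ENat.natCast_ne_top n), le_sInf_iff, Set.forall_mem_image]
    exact forall₂_congr fun m _ ↦ by norm_cast
  simp only [sInf_lt_iff, Set.exists_mem_image, hlt]

lemma mem_hitsAt_iff :
    ω ∈ hitsAt S x ↔ ∃ n, (ω n ∈ S ∧ ∀ m < n, ω m ∉ S) ∧ ω n = x := by
  refine exists_congr fun n ↦ and_congr_left fun _ ↦ sInf_image_natCast_eq_iff.trans ?_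
  refine and_congr_right fun _ ↦ forall_congr' fun m ↦ ?_
  rw [← not_imp_not, not_le]
  rfl

/-- The time shift `(X_0, X_1, …) ↦ (X_1, X_2, …)` on trajectories, which implements the
first-step analysis. -/
def shift (ω : ℕ → V) : ℕ → V := fun n ↦ ω (n + 1)

lemma mem_hitsAt_iff_of_zero_mem (h0 : ω 0 ∈ S) : ω ∈ hitsAt S x ↔ ω 0 = x := by
  rw [mem_hitsAt_iff]
  refine ⟨?_, fun h ↦ ⟨0, ⟨h0, fun m hm ↦ absurd hm m.not_lt_zero⟩, h⟩⟩
  rintro ⟨n, ⟨-, hmin⟩, hx⟩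
  rwa [Nat.eq_zero_of_not_pos fun hn ↦ hmin 0 hn h0] at hx

lemma shift_mem_hitsAt_iff (h0 : ω 0 ∉ S) : shift ω ∈ hitsAt S x ↔ ω ∈ hitsAt S x := by
  simp only [mem_hitsAt_iff]
  constructor
  · rintro ⟨n, ⟨hn, hmin⟩, hx⟩
    refine ⟨n + 1, ⟨hn, fun m hm ↦ ?_⟩, hx⟩
    cases m with
    | zero => exact h0
    | succ m => exact hmin m (Nat.lt_of_succ_lt_succ hm)
  · rintro ⟨n, ⟨hn, hmin⟩, hx⟩
    cases n with
    | zero => exact absurd hn h0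
    | succ n => exact ⟨n, ⟨hn, fun m hm ↦ hmin (m + 1) (Nat.succ_lt_succ hm)⟩, hx⟩

lemma hit_lt_hitPlus_iff (h0 : ω 0 = x) (hxy : x ≠ y) :
    hit {y} ω < hitPlus {x} ω ↔ shift ω ∈ hitsAt {x, y} y := by
  rw [hit, hitPlus, sInf_image_natCast_lt_iff, mem_hitsAt_iff]
  constructor
  · rintro ⟨n, hn, hbefore⟩
    classical
    have hvisit : ∃ n, ω n = y := ⟨n, hn⟩
    obtain ⟨k, hk⟩ := Nat.exists_eq_succ_of_ne_zero
      fun h : Nat.find hvisit = 0 ↦ hxy (h0.symm.trans (h ▸ Nat.find_spec hvisit))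
    have hky : ω k.succ = y := by
      rw [← hk]
      exact Nat.find_spec hvisit
    refine ⟨k, ⟨.inr hky, fun m hm ↦ ?_⟩, hky⟩
    rintro (hx | hy)
    · have := hbefore (m + 1) ⟨m.succ_pos, hx⟩
      have := Nat.find_min' hvisit hn
      omega
    · exact Nat.find_min hvisit (by omega) hy
  · rintro ⟨n, ⟨-, hmin⟩, hy⟩
    refine ⟨n + 1, hy, fun m hm ↦ ?_⟩
    obtain ⟨hpos, hmx⟩ := hm
    obtain ⟨k, rfl⟩ := Nat.exists_eq_add_of_le' hpos
    rcases lt_trichotomy k n with hkn | rfl | hkn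
    · exact absurd (.inl hmx) (hmin k hkn)
    · exact absurd (hmx.symm.trans hy) hxy
    · exact Nat.succ_lt_succ hkn

variable [MeasurableSpace V]

lemma measurable_shift : Measurable (shift : (ℕ → V) → ℕ → V) := by
  unfold shift
  fun_prop

variable [MeasurableSingletonClass V]

lemma measurableSet_initial (t : ℕ) (w : ℕ → V) :
    MeasurableSet {ω : ℕ → V | ∀ i ≤ t, ω i = w i} := by
  have hinter : {ω : ℕ → V | ∀ i ≤ t, ω i = w i} = ⋂ i ≤ t, Function.eval i ⁻¹' {w i} := by
    ext ω
    simp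
  rw [hinter]
  exact .iInter fun i ↦ .iInter fun _ ↦ measurable_pi_apply i (measurableSet_singleton (w i))

variable [Countable V]

lemma measurableSet_hitsAt (S : Set V) (x : V) : MeasurableSet (hitsAt S x) := by
  have hmem (T : Set V) (n : ℕ) : MeasurableSet {ω : ℕ → V | ω n ∈ T} :=
    measurable_pi_apply n T.to_countable.measurableSet
  have hunion : hitsAt S x =
      ⋃ n, ({ω | ω n ∈ S} ∩ ⋂ m < n, {ω | ω m ∈ Sᶜ}) ∩ {ω | ω n ∈ ({x} : Set V)} := by
    ext ω
    simp [mem_hitsAt_iff]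
  rw [hunion]
  exact .iUnion fun n ↦ ((hmem S n).inter (.iInter fun m ↦ .iInter fun _ ↦ hmem Sᶜ m)).inter
    (hmem {x} n)

lemma measure_eq_of_forall_initial {ν₁ ν₂ : Measure (ℕ → V)} [IsFiniteMeasure ν₁]
    (h : ∀ (t : ℕ) (w : ℕ → V), ν₁ {ω | ∀ i ≤ t, ω i = w i} = ν₂ {ω | ∀ i ≤ t, ω i = w i}) :
    ν₁ = ν₂ := by
  have hmarginal (n : ℕ) : ν₂.map (Preorder.frestrictLe (π := fun _ ↦ V) n) =
      ν₁.map (Preorder.frestrictLe (π := fun _ ↦ V) n) := by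
    refine Measure.ext_of_singleton fun a ↦ ?_
    obtain ⟨w, rfl⟩ : ∃ w : ℕ → V, Preorder.frestrictLe n w = a :=
      ⟨_, Preorder.frestrictLe_updateFinset (fun _ ↦ a ⟨0, by simp⟩) a⟩
    have hpre : Preorder.frestrictLe (π := fun _ ↦ V) n ⁻¹' {Preorder.frestrictLe n w} =
        {ω | ∀ i ≤ n, ω i = w i} := by
      ext ω
      simp [funext_iff]
    rw [Measure.map_apply (by fun_prop) (measurableSet_singleton _),
      Measure.map_apply (by fun_prop) (measurableSet_singleton _), hpre, h]
  let marginal (I : Finset ℕ) : Measure (I → V) := ν₁.map I.restrict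
  have hproj : IsProjectiveMeasureFamily (α := fun _ ↦ V) marginal := fun I J hJI ↦ by
    rw [Measure.map_map (by fun_prop) (by fun_prop)]
    rfl
  have hlim : IsProjectiveLimit (α := fun _ ↦ V) ν₁ marginal := fun I ↦ rfl
  exact hlim.unique ((isProjectiveLimit_nat_iff hproj ν₂).2 hmarginal)

end Paths

section MarkovChain

variable {V : Type*} [DecidableEq V] [MeasurableSpace V] [MeasurableSingletonClass V]
  {P : Matrix V V ℝ} {μ : V → Measure (ℕ → V)} {S : Set V}

lemma IsMarkovChain.ae_zero_eq (hμ : IsMarkovChain P μ) (x : V) : ∀ᵐ ω ∂μ x, ω 0 = x := by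
  have := hμ.1 x
  have h := (prob_compl_eq_zero_iff (measurableSet_initial 0 fun _ ↦ x)).2
    (by simpa using hμ.2 x 0 fun _ ↦ x)
  simpa [ae_iff, ← Set.compl_ofPred] using h

lemma IsMarkovChain.harm_of_mem (hμ : IsMarkovChain P μ) {y : V} (hy : y ∈ S) (x : V) :
    harm μ S y x = if y = x then 1 else 0 := by
  have := hμ.1 y
  have hae : hitsAt S x =ᵐ[μ y] {_ω | y = x} := by
    filter_upwards [hμ.ae_zero_eq y] with ω hω
    exact propext ((mem_hitsAt_iff_of_zero_mem (hω ▸ hy)).trans (by rw [hω]; rfl))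
  rw [harm, measure_congr hae]
  rcases eq_or_ne y x with rfl | hyx
  · simp
  · simp [hyx]

lemma IsMarkovChain.measure_preimage_shift_initial (hμ : IsMarkovChain P μ) (x : V) (t : ℕ)
    (w : ℕ → V) :
    μ x (shift ⁻¹' {ω | ∀ i ≤ t, ω i = w i}) =
      ENNReal.ofReal (P x (w 0) * ∏ i ∈ Finset.range t, P (w i) (w (i + 1))) := by
  let xw : ℕ → V := fun n ↦ Nat.casesOn n x w
  have hae : shift ⁻¹' {ω | ∀ i ≤ t, ω i = w i} =ᵐ[μ x] {ω | ∀ i ≤ t + 1, ω i = xw i} := by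
    filter_upwards [hμ.ae_zero_eq x] with ω hω
    refine propext ⟨fun h i hi ↦ ?_, fun h i hi ↦ h (i + 1) (Nat.succ_le_succ hi)⟩
    cases i with
    | zero => exact hω
    | succ i => exact h i (Nat.le_of_succ_le_succ hi)
  rw [measure_congr hae, hμ.2, if_pos (show xw 0 = x from rfl), one_mul, Finset.prod_range_succ',
    mul_comm]
  rfl

variable [Fintype V]

lemma IsMarkovChain.map_shift (hμ : IsMarkovChain P μ) (hP : ∀ x y, 0 ≤ P x y) (x : V) :
    (μ x).map shift = ∑ z, ENNReal.ofReal (P x z) • μ z := by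
  have := hμ.1 x
  refine measure_eq_of_forall_initial fun t w ↦ ?_
  rw [Measure.map_apply measurable_shift (measurableSet_initial t w),
    hμ.measure_preimage_shift_initial, Measure.finsetSum_apply, Fintype.sum_eq_single (w 0)]
  · rw [Measure.smul_apply, hμ.2, if_pos rfl, one_mul, smul_eq_mul, ENNReal.ofReal_mul (hP _ _)]
  · intro z hz
    rw [Measure.smul_apply, hμ.2, if_neg hz.symm, zero_mul, ENNReal.ofReal_zero, smul_zero]

lemma IsMarkovChain.isStochastic (hμ : IsMarkovChain P μ) (hP : ∀ x y, 0 ≤ P x y) :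
    IsStochastic P := by
  refine ⟨hP, fun x ↦ ?_⟩
  have hprob := hμ.1
  have h := congrArg (fun ν ↦ ν Set.univ) (hμ.map_shift hP x)
  simp only [Measure.map_apply measurable_shift MeasurableSet.univ, Set.preimage_univ,
    Measure.finsetSum_apply, Measure.smul_apply, measure_univ, smul_eq_mul, mul_one,
    ← ENNReal.ofReal_sum_of_nonneg fun y _ ↦ hP x y] at h
  exact ENNReal.ofReal_eq_one.1 h.symm

lemma IsMarkovChain.measureReal_preimage_shift_hitsAt (hμ : IsMarkovChain P μ)
    (hP : ∀ x y, 0 ≤ P x y) (S : Set V) (x y : V) :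
    (μ y).real (shift ⁻¹' hitsAt S x) = (P *ᵥ fun z ↦ harm μ S z x) y := by
  have hprob := hμ.1
  rw [measureReal_def, ← Measure.map_apply measurable_shift (measurableSet_hitsAt S x),
    hμ.map_shift hP, Measure.finsetSum_apply, ENNReal.toReal_sum]
  · refine Finset.sum_congr rfl fun z _ ↦ ?_
    rw [Measure.smul_apply, smul_eq_mul, ENNReal.toReal_mul, ENNReal.toReal_ofReal (hP y z)]
    rfl
  · exact fun z _ ↦ ENNReal.mul_ne_top ENNReal.ofReal_ne_top (measure_ne_top _ _)

lemma IsMarkovChain.harm_of_notMem (hμ : IsMarkovChain P μ) (hP : ∀ x y, 0 ≤ P x y) {y : V}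
    (hy : y ∉ S) (x : V) : harm μ S y x = (P *ᵥ fun z ↦ harm μ S z x) y := by
  rw [← hμ.measureReal_preimage_shift_hitsAt hP]
  refine congrArg ENNReal.toReal (measure_congr ?_)
  filter_upwards [hμ.ae_zero_eq y] with ω hω
  exact propext (shift_mem_hitsAt_iff (hω ▸ hy)).symm

lemma IsMarkovChain.measureReal_hit_lt_hitPlus (hμ : IsMarkovChain P μ)
    (hP : ∀ x y, 0 ≤ P x y) {x y : V} (hxy : x ≠ y) :
    (μ x).real {ω | hit {y} ω < hitPlus {x} ω} = (P *ᵥ fun z ↦ harm μ {x, y} z y) x := by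
  rw [← hμ.measureReal_preimage_shift_hitsAt hP]
  refine congrArg ENNReal.toReal (measure_congr ?_)
  filter_upwards [hμ.ae_zero_eq x] with ω hω
  exact propext (hit_lt_hitPlus_iff hω hxy)

end MarkovChain

section HarmonicMeasure

lemma IsMarkovChain.uP_le_one {V : Type*} [DecidableEq V] [MeasurableSpace V] [Nontrivial V]
    {P : Matrix V V ℝ} {μ : V → Measure (ℕ → V)} (hμ : IsMarkovChain P μ) : uP μ ≤ 1 := by
  obtain ⟨x, y, hxy⟩ := exists_pair_ne V
  have := hμ.1 x
  refine le_trans (b := (μ x {ω | hit {y} ω < hitPlus {x} ω}).toReal)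
    (csInf_le ⟨0, ?_⟩ ⟨x, y, hxy, rfl⟩) measureReal_le_one
  rintro _ ⟨_, _, _, rfl⟩
  exact ENNReal.toReal_nonneg

variable {V : Type*} [Fintype V] [DecidableEq V] [MeasurableSpace V] [MeasurableSingletonClass V]
  {P : Matrix V V ℝ} {π : V → ℝ} {μ : V → Measure (ℕ → V)}

lemma IsMarkovChain.harmStat_eq (hμ : IsMarkovChain P μ) (hP : ∀ x y, 0 ≤ P x y)
    (hπ : IsReversible P π) {S : Set V} {w : V → ℝ} (hw : IsMeanHit P S w) {x : V} (hx : x ∈ S) :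
    harmStat π μ S x = π x * (1 + (P *ᵥ w) x) :=
  hw.dotProduct_eq_of_harmonic hπ hx (fun _ hy ↦ hμ.harm_of_mem hy x)
    fun _ hy ↦ hμ.harm_of_notMem hP hy x

lemma IsMarkovChain.harmStat_le (hμ : IsMarkovChain P μ) (hP : IsStochastic P)
    (hπ : IsReversible P π) (hlam : lam P π < 1) {S : Set V} {x : V} (hx : x ∈ S) :
    harmStat π μ S x ≤
      5 / (1 - lam P π) * max (π x / piOf π S) (π x * Real.log (1 / pimin π)) := by
  obtain ⟨w, hw⟩ := hπ.exists_isMeanHit hP hlam ⟨x, hx⟩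
  have hgap : 0 < 1 - lam P π := sub_pos.2 hlam
  have hpos := hπ.1 x
  have hR : 1 ≤ (piOf π S)⁻¹ := (one_le_inv₀ (hπ.piOf_pos ⟨x, hx⟩)).2 (hπ.piOf_le_one S)
  set M := max (π x / piOf π S) (π x * Real.log (1 / pimin π))
  have hM₁ : π x * (piOf π S)⁻¹ ≤ M := le_max_left _ _
  have hM₂ : π x * Real.log (1 / pimin π) ≤ M := le_max_right _ _
  have hPw := hP.mulVec_le_of_forall_le (hw.apply_le hπ hP hlam ⟨x, hx⟩) x
  rw [le_div_iff₀ hgap] at hPw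
  rw [hμ.harmStat_eq hP.1 hπ hw hx, div_mul_eq_mul_div, le_div_iff₀ hgap]
  calc π x * (1 + (P *ᵥ w) x) * (1 - lam P π)
      = π x * ((1 - lam P π) + (P *ᵥ w) x * (1 - lam P π)) := by ring
    _ ≤ π x * ((piOf π S)⁻¹ + (Real.log (1 / pimin π) + (piOf π S)⁻¹ + 2 * (piOf π S)⁻¹)) := by
        gcongr
        · linarith [lam_nonneg P π]
        · linarith
    _ ≤ 5 * M := by linarith

variable [Nontrivial V]

lemma IsMarkovChain.le_uP (hμ : IsMarkovChain P μ) (hP : IsStochastic P)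
    (hπ : IsReversible P π) (hlam : lam P π < 1) :
    (1 - lam P π) * pimin π / (2 * pimax π) ≤ uP μ := by
  obtain ⟨x₀, y₀, hxy₀⟩ := exists_pair_ne V
  refine le_csInf ⟨_, x₀, y₀, hxy₀, rfl⟩ ?_
  rintro _ ⟨x, y, hxy, rfl⟩
  refine (hπ.le_mulVec_of_harmonic hP hlam (y := y) ?_ ?_ fun z hzx hzy ↦ ?_).trans_eq
    (hμ.measureReal_hit_lt_hitPlus hP.1 hxy).symm
  · rw [hμ.harm_of_mem (by simp), if_neg hxy]
  · rw [hμ.harm_of_mem (by simp), if_pos rfl]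
  · exact hμ.harm_of_notMem hP.1 (by simp [hzx, hzy]) y

end HarmonicMeasure

section Uniform

variable {V : Type*} [Fintype V]

lemma isReversible_uniform [Nonempty V] {P : Matrix V V ℝ} (hP : P.IsSymm) :
    IsReversible P fun _ ↦ (Fintype.card V : ℝ)⁻¹ := by
  have hcard : 0 < (Fintype.card V : ℝ) := Nat.cast_pos.2 Fintype.card_pos
  refine ⟨fun _ ↦ inv_pos.2 hcard, ?_, fun x y ↦ by rw [hP.apply x y]⟩
  rw [Finset.sum_const, Finset.card_univ, nsmul_eq_mul, mul_inv_cancel₀ hcard.ne']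

lemma piOf_const (c : ℝ) (S : Set V) : piOf (fun _ ↦ c) S = S.ncard * c := by
  classical
  rw [piOf, Set.ncard_eq_toFinset_card', ← nsmul_eq_mul, ← Finset.sum_const]
  simp [Set.indicator_apply, Finset.sum_ite]

end Uniform

section LazyWalk

variable {V : Type*} [DecidableEq V] {H : SimpleGraph V} [DecidableRel H.Adj] {d : ℕ}

lemma lazySRW_apply_self (x : V) : lazySRW H d x x = 1 / 2 := by simp [lazySRW]

lemma lazySRW_apply_of_adj {x y : V} (hxy : H.Adj x y) :
    lazySRW H d x y = 1 / (2 * d) := by simp [lazySRW, hxy, hxy.ne']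

lemma lazySRW_nonneg (x y : V) : 0 ≤ lazySRW H d x y := by
  rw [lazySRW, Matrix.of_apply]
  split_ifs <;> positivity

lemma isSymm_lazySRW : (lazySRW H d).IsSymm :=
  Matrix.IsSymm.ext fun x y ↦ by
    simp only [lazySRW, Matrix.of_apply, H.adj_comm x y, eq_comm]

variable [Fintype V]

lemma IsStochastic.exists_adj_of_lazySRW (hP : IsStochastic (lazySRW H d)) (x : V) :
    d ≠ 0 ∧ ∃ y, H.Adj x y := by
  by_contra! h
  have hoff (y : V) (hy : y ≠ x) : lazySRW H d x y = 0 := by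
    rw [lazySRW, Matrix.of_apply, if_neg hy, ite_eq_right_iff]
    intro hadj
    have hd : d = 0 := by_contra fun hd ↦ h hd y hadj
    simp [hd]
  have hrow := hP.2 x
  rw [Fintype.sum_eq_single x hoff, lazySRW_apply_self] at hrow
  norm_num at hrow

lemma IsStochastic.isIrreducible_lazySRW (hP : IsStochastic (lazySRW H d))
    (hH : H.Connected) : IsIrreducible (lazySRW H d) := by
  intro x y
  obtain ⟨p⟩ := hH.preconnected x y
  induction p with
  | nil => exact ⟨0, by simp⟩
  | @cons x z y hxz _ ih =>
    obtain ⟨t, ht⟩ := ih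
    have hd := (hP.exists_adj_of_lazySRW x).1
    exact ⟨t + 1, hP.pow_succ_apply_pos (by rw [lazySRW_apply_of_adj hxz]; positivity) ht⟩

lemma isAperiodic_lazySRW : IsAperiodic (lazySRW H d) := fun x _ hk ↦
  Nat.dvd_one.1 <| hk 1 <| by
    rw [pow_one, lazySRW_apply_self]
    exact one_half_pos

end LazyWalk

theorem stmt9_general {V : Type*} [Fintype V] [DecidableEq V] [Nontrivial V] [MeasurableSpace V]
    [MeasurableSingletonClass V] {P : Matrix V V ℝ} {π : V → ℝ} (hP : IsStochastic P)
    (hirr : IsIrreducible P) (haper : IsAperiodic P) (hπ : IsReversible P π)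
    {μ : V → Measure (ℕ → V)} (hμ : IsMarkovChain P μ) {S : Set V} {x : V} (hx : x ∈ S) :
    harmStat π μ S x ≤
        5 / (uP μ * (1 - lam P π)) * max (π x / piOf π S) (π x * Real.log (1 / pimin π)) ∧
      5 / (uP μ * (1 - lam P π)) * max (π x / piOf π S) (π x * Real.log (1 / pimin π)) ≤
        10 * (pimax π / pimin π) / (1 - lam P π) ^ 2 *
          max (π x / piOf π S) (π x * Real.log (1 / pimin π)) := by
  have hlam := hπ.lam_lt_one hP hirr haper
  have hgap : 0 < 1 - lam P π := sub_pos.2 hlam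
  have hmin : 0 < pimin π := hπ.pimin_pos
  have hmax : 0 < pimax π := (hπ.1 x).trans_le (le_pimax π x)
  have hM : 0 ≤ max (π x / piOf π S) (π x * Real.log (1 / pimin π)) :=
    le_max_of_le_left (div_pos (hπ.1 x) (hπ.piOf_pos ⟨x, hx⟩)).le
  have hlower := hμ.le_uP hP hπ hlam
  have hu : 0 < uP μ := lt_of_lt_of_le (by positivity) hlower
  constructor
  · refine (hμ.harmStat_le hP hπ hlam hx).trans ?_
    gcongr
    exact mul_le_of_le_one_left hgap.le hμ.uP_le_one
  · refine mul_le_mul_of_nonneg_right ?_ hM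
    calc 5 / (uP μ * (1 - lam P π))
        ≤ 5 / ((1 - lam P π) * pimin π / (2 * pimax π) * (1 - lam P π)) := by gcongr
      _ = 10 * (pimax π / pimin π) / (1 - lam P π) ^ 2 := by field_simp; norm_num

/-- There are universal constants `C, C' > 0` such that for the lazy simple random
walk on any connected `d`-regular graph on `N` vertices, every nonempty `S` and every
`x ∈ S`, the harmonic measure from the uniform distribution satisfies
`h_S(x) ≤ (C/(u(P)(1−λ))) max(1/|S|, log N / N) ≤ (C'/(1−λ)²) max(1/|S|, log N / N)`. -/
theorem stmt9 :
    ∃ C : ℝ, 0 < C ∧ ∃ C' : ℝ, 0 < C' ∧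
      ∀ (G : Type) [Fintype G] [DecidableEq G] [MeasurableSpace G]
        [MeasurableSingletonClass G]
        (H : SimpleGraph G) [DecidableRel H.Adj] (d : ℕ),
        H.IsRegularOfDegree d → H.Connected →
        ∀ (μ : G → Measure (ℕ → G)), IsMarkovChain (lazySRW H d) μ →
        ∀ (S : Set G), S.Nonempty → ∀ x ∈ S,
          harmStat (fun _ => ((Fintype.card G : ℝ))⁻¹) μ S x ≤
              C / (uP μ * (1 - lam (lazySRW H d) (fun _ => ((Fintype.card G : ℝ))⁻¹))) *
                max (1 / (S.ncard : ℝ)) (Real.log (Fintype.card G) / (Fintype.card G : ℝ)) ∧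
            C / (uP μ * (1 - lam (lazySRW H d) (fun _ => ((Fintype.card G : ℝ))⁻¹))) *
                max (1 / (S.ncard : ℝ)) (Real.log (Fintype.card G) / (Fintype.card G : ℝ)) ≤
              C' / (1 - lam (lazySRW H d) (fun _ => ((Fintype.card G : ℝ))⁻¹)) ^ 2 *
                max (1 / (S.ncard : ℝ)) (Real.log (Fintype.card G) / (Fintype.card G : ℝ)) := by
  refine ⟨5, by norm_num, 10, by norm_num, ?_⟩
  intro G _ _ _ _ H _ d _ hH μ hμ S _ x hx
  have : Nonempty G := ⟨x⟩
  have hP := hμ.isStochastic lazySRW_nonneg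
  obtain ⟨-, y, hxy⟩ := hP.exists_adj_of_lazySRW x
  have : Nontrivial G := ⟨x, y, hxy.ne⟩
  have hcard : (Fintype.card G : ℝ)⁻¹ ≠ 0 := by positivity
  simpa [piOf_const, pimin, pimax, hcard, div_mul_cancel_right₀, inv_mul_eq_div] using
    stmt9_general hP (hP.isIrreducible_lazySRW hH) isAperiodic_lazySRW
      (isReversible_uniform isSymm_lazySRW) hμ hx

end HM
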